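/- Let 𝕂 be ℝ or ℂ, let 1 ≤ p_1, …, p_n ≤ q ≤ s < ∞, and let E_1, …, E_n, F be Banach spaces over 𝕂. For a continuous n-linear operator A : E_1 × ⋯ × E_n → F the following are equivalent: (a) A is multiple (s,q;p_1,…,p_n)-mixing summing; (b) for every Banach space G over 𝕂 and every absolutely s-summing linear operator u : F → G, the composition u ∘ A is multiple (q;p_1,…,p_n)-summing. -/

import Mathlib

/-!
Mixing summability implies the summability of `u ∘ A` by Hölder's inequality: if
`z j = τ j • y j`, then `‖u (z j)‖ = |τ j| ‖u (y j)‖` and `1/q = 1/ρ + 1/s`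
(`sum_le_mul_mixedNorm`).

The converse rests on Maurey's description of the mixed norm: the mixed `(s,q)`-norm of a finite
family `z` is at most the supremum of `(∑ j, (∫ |φ (z j)| ^ s dμ(φ)) ^ (q/s)) ^ (1/q)` over
finitely supported probability measures `μ` on the dual unit ball (`mixedNorm_le_of_convexHull`).
The vectors `a j = ∫ |φ (z j)| ^ s dμ` form a bounded convex set in `ℝ^J`, and the first-order
condition at a maximizer `b` of the concave function `∑ j, (a j + ε) ^ (q/s)` over its closure
(`exists_support`) yields explicit scalars `τ` of an almost optimal factorization
(`mixedNorm_le_of_support`).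

If `A` is not mixing summing, then for each `N` there are a grid and a discrete measure `μ_N`
violating the estimate with constant `4 ^ N` (`exists_violation`). The diagonal operator
`F → ℓ^s` attached to the measure `∑ N, 2⁻ᴺ μ_N` (`exists_diagonal_operator`) is absolutely
`s`-summing, but `u ∘ A` is not multiple `(q;p₁,…,pₙ)`-summing, since its `N`-th block alone forces
every admissible constant to exceed `2 ^ N`. As `ℓ^s` over a countable index set has at most the
cardinality of the continuum, it has an isometric copy in every universe
(`exists_isometric_copy`), so the target can be taken in the prescribed one.
-/


open scoped BigOperators
noncomputable section

/-- The weak `ℓ^q` norm of a finite family in a normed space: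
`sup_{‖φ‖ ≤ 1} (∑_j |φ(x_j)|^q)^{1/q}`. -/
def weakLpNorm (𝕂 : Type*) [RCLike 𝕂] {E : Type*} [NormedAddCommGroup E] [NormedSpace 𝕂 E]
    {J : Type*} [Fintype J] (q : ℝ) (x : J → E) : ℝ :=
  ⨆ φ : {φ : E →L[𝕂] 𝕂 // ‖φ‖ ≤ 1}, (∑ j, ‖φ.1 (x j)‖ ^ q) ^ (1 / q)

/-- `T` is multiple `(p;p₁,…,pₙ)`-summing. -/
def MultipleSumming (𝕂 : Type*) [RCLike 𝕂] {n : ℕ} {E : Fin n → Type*}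
    [∀ i, NormedAddCommGroup (E i)] [∀ i, NormedSpace 𝕂 (E i)]
    {G : Type*} [NormedAddCommGroup G] [NormedSpace 𝕂 G]
    (p : ℝ) (q : Fin n → ℝ) (T : ((i : Fin n) → E i) → G) : Prop :=
  ∃ C : ℝ, 0 ≤ C ∧ ∀ (m : ℕ) (x : (i : Fin n) → Fin m → E i),
    (∑ j : Fin n → Fin m, ‖T (fun i => x i (j i))‖ ^ p) ^ (1 / p) ≤
      C * ∏ i, weakLpNorm 𝕂 (q i) (x i)

/-- The multiple `(p;p₁,…,pₙ)`-summing norm of `T`: the infimum of the admissible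
constants. -/
def masNorm (𝕂 : Type*) [RCLike 𝕂] {n : ℕ} {E : Fin n → Type*}
    [∀ i, NormedAddCommGroup (E i)] [∀ i, NormedSpace 𝕂 (E i)]
    {G : Type*} [NormedAddCommGroup G] [NormedSpace 𝕂 G]
    (p : ℝ) (q : Fin n → ℝ) (T : ((i : Fin n) → E i) → G) : ℝ :=
  sInf { C : ℝ | 0 ≤ C ∧ ∀ (m : ℕ) (x : (i : Fin n) → Fin m → E i),
    (∑ j : Fin n → Fin m, ‖T (fun i => x i (j i))‖ ^ p) ^ (1 / p) ≤
      C * ∏ i, weakLpNorm 𝕂 (q i) (x i) }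

/-- `u` is an absolutely `r`-summing linear operator. -/
def AbsolutelySummingOp (𝕂 : Type*) [RCLike 𝕂] {F G : Type*}
    [NormedAddCommGroup F] [NormedSpace 𝕂 F] [NormedAddCommGroup G] [NormedSpace 𝕂 G]
    (r : ℝ) (u : F →L[𝕂] G) : Prop :=
  ∃ C : ℝ, 0 ≤ C ∧ ∀ (k : ℕ) (y : Fin k → F),
    (∑ j : Fin k, ‖u (y j)‖ ^ r) ^ (1 / r) ≤ C * weakLpNorm 𝕂 r y

/-- The absolutely `r`-summing norm `π_r(u)`. -/
def piNorm (𝕂 : Type*) [RCLike 𝕂] {F G : Type*}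
    [NormedAddCommGroup F] [NormedSpace 𝕂 F] [NormedAddCommGroup G] [NormedSpace 𝕂 G]
    (r : ℝ) (u : F →L[𝕂] G) : ℝ :=
  sInf { C : ℝ | 0 ≤ C ∧ ∀ (k : ℕ) (y : Fin k → F),
    (∑ j : Fin k, ‖u (y j)‖ ^ r) ^ (1 / r) ≤ C * weakLpNorm 𝕂 r y }

/-- The mixed `(s,q)`-norm of a finite family `z` in `F`:
`inf ‖(τ_j)‖_{ℓ^ρ} ‖(y_j)‖_{w,s}` over factorizations `z_j = τ_j • y_j`, where
`1/ρ = 1/q - 1/s` (so `ρ = ∞`, i.e. the sup norm, when `s = q`). -/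
def mixedNorm (𝕂 : Type*) [RCLike 𝕂] {F : Type*} [NormedAddCommGroup F] [NormedSpace 𝕂 F]
    {J : Type*} [Fintype J] (s q : ℝ) (z : J → F) : ℝ :=
  sInf { c : ℝ | ∃ τ : J → 𝕂, ∃ y : J → F, (∀ j, z j = τ j • y j) ∧
      c = (if s = q then ⨆ j, ‖τ j‖
           else (∑ j, ‖τ j‖ ^ (1 / q - 1 / s)⁻¹) ^ (1 / q - 1 / s)) * weakLpNorm 𝕂 s y }

/-- `A` is multiple `(s,q;p₁,…,pₙ)`-mixing summing. -/
def MultipleMixingSumming (𝕂 : Type*) [RCLike 𝕂] {n : ℕ} {E : Fin n → Type*}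
    [∀ i, NormedAddCommGroup (E i)] [∀ i, NormedSpace 𝕂 (E i)]
    {F : Type*} [NormedAddCommGroup F] [NormedSpace 𝕂 F]
    (s q : ℝ) (p : Fin n → ℝ) (A : ((i : Fin n) → E i) → F) : Prop :=
  ∃ σ : ℝ, 0 ≤ σ ∧ ∀ (m : ℕ) (x : (i : Fin n) → Fin m → E i),
    mixedNorm 𝕂 s q (fun j : Fin n → Fin m => A (fun i => x i (j i))) ≤
      σ * ∏ i, weakLpNorm 𝕂 (p i) (x i)

/-- The multiple `(s,q;p₁,…,pₙ)`-mixing summing norm of `A`. -/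
def mixingNorm (𝕂 : Type*) [RCLike 𝕂] {n : ℕ} {E : Fin n → Type*}
    [∀ i, NormedAddCommGroup (E i)] [∀ i, NormedSpace 𝕂 (E i)]
    {F : Type*} [NormedAddCommGroup F] [NormedSpace 𝕂 F]
    (s q : ℝ) (p : Fin n → ℝ) (A : ((i : Fin n) → E i) → F) : ℝ :=
  sInf { σ : ℝ | 0 ≤ σ ∧ ∀ (m : ℕ) (x : (i : Fin n) → Fin m → E i),
    mixedNorm 𝕂 s q (fun j : Fin n → Fin m => A (fun i => x i (j i))) ≤
      σ * ∏ i, weakLpNorm 𝕂 (p i) (x i) }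

universe uG

/-! ### Weak and mixed norms; Hölder's inequality -/

section Weak

variable {𝕂 : Type*} [RCLike 𝕂] {E : Type*} [NormedAddCommGroup E] [NormedSpace 𝕂 E]
  {J : Type*} [Fintype J]

lemma weakLpNorm_bddAbove {q : ℝ} (hq : 0 < q) (x : J → E) :
    BddAbove (Set.range fun φ : {φ : E →L[𝕂] 𝕂 // ‖φ‖ ≤ 1} =>
      (∑ j, ‖φ.1 (x j)‖ ^ q) ^ (1 / q)) := by
  refine ⟨(∑ j, ‖x j‖ ^ q) ^ (1 / q), ?_⟩
  rintro _ ⟨φ, rfl⟩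
  have h : ∀ j, ‖φ.1 (x j)‖ ≤ ‖x j‖ := fun j =>
    (φ.1.le_opNorm (x j)).trans (mul_le_of_le_one_left (norm_nonneg _) φ.2)
  dsimp only
  gcongr with j
  exact h j

lemma weakLpNorm_nonneg (q : ℝ) (x : J → E) : 0 ≤ weakLpNorm 𝕂 q x :=
  Real.iSup_nonneg fun _ => by positivity

lemma sum_rpow_le_weakLpNorm_rpow {q : ℝ} (hq : 0 < q) (x : J → E) {φ : E →L[𝕂] 𝕂}
    (hφ : ‖φ‖ ≤ 1) : ∑ j, ‖φ (x j)‖ ^ q ≤ weakLpNorm 𝕂 q x ^ q := by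
  have h := le_ciSup (weakLpNorm_bddAbove (𝕂 := 𝕂) hq x) ⟨φ, hφ⟩
  have h0 : (0 : ℝ) ≤ ∑ j, ‖φ (x j)‖ ^ q := by positivity
  calc ∑ j, ‖φ (x j)‖ ^ q = ((∑ j, ‖φ (x j)‖ ^ q) ^ (1 / q)) ^ q := by
        rw [← Real.rpow_mul h0, one_div_mul_cancel hq.ne', Real.rpow_one]
    _ ≤ weakLpNorm 𝕂 q x ^ q := by
        have h1 : (0 : ℝ) ≤ (∑ j, ‖φ (x j)‖ ^ q) ^ (1 / q) := by positivity
        exact Real.rpow_le_rpow h1 h hq.le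

lemma weakLpNorm_le {q : ℝ} (x : J → E) {M : ℝ} (hq : 0 < q)
    (h : ∀ φ : E →L[𝕂] 𝕂, ‖φ‖ ≤ 1 → ∑ j, ‖φ (x j)‖ ^ q ≤ M) :
    weakLpNorm 𝕂 q x ≤ M ^ (1 / q) := by
  have : Nonempty {φ : E →L[𝕂] 𝕂 // ‖φ‖ ≤ 1} := ⟨⟨0, by simp⟩⟩
  refine ciSup_le fun φ => ?_
  have h1 := h φ.1 φ.2
  gcongr

lemma weakLpNorm_comp_equiv {J' : Type*} [Fintype J'] (q : ℝ) (x : J → E) (e : J' ≃ J) :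
    weakLpNorm 𝕂 q (fun j => x (e j)) = weakLpNorm 𝕂 q x := by
  unfold weakLpNorm
  congr 1
  funext φ
  rw [e.sum_comp (fun j => ‖φ.1 (x j)‖ ^ q)]

end Weak

section Mixed

variable {𝕂 : Type*} [RCLike 𝕂] {F : Type*} [NormedAddCommGroup F] [NormedSpace 𝕂 F]
  {J : Type*} [Fintype J]

lemma mixedNorm_le_of_factor (s q : ℝ) (z : J → F) (τ : J → 𝕂) (y : J → F)
    (h : ∀ j, z j = τ j • y j) :
    mixedNorm 𝕂 s q z ≤ (if s = q then ⨆ j, ‖τ j‖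
           else (∑ j, ‖τ j‖ ^ (1 / q - 1 / s)⁻¹) ^ (1 / q - 1 / s)) * weakLpNorm 𝕂 s y := by
  refine csInf_le ⟨0, ?_⟩ ⟨τ, y, h, rfl⟩
  rintro _ ⟨τ, y, -, rfl⟩
  refine mul_nonneg ?_ (weakLpNorm_nonneg _ _)
  split_ifs
  · exact Real.iSup_nonneg fun _ => norm_nonneg _
  · positivity

lemma AbsolutelySummingOp.sum_le {G : Type*} [NormedAddCommGroup G] [NormedSpace 𝕂 G] {s C : ℝ}
    {u : F →L[𝕂] G}
    (hu : ∀ (k : ℕ) (y : Fin k → F),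
      (∑ j : Fin k, ‖u (y j)‖ ^ s) ^ (1 / s) ≤ C * weakLpNorm 𝕂 s y) (y : J → F) :
    (∑ j, ‖u (y j)‖ ^ s) ^ (1 / s) ≤ C * weakLpNorm 𝕂 s y := by
  have h := hu _ (fun i => y ((Fintype.equivFin J).symm i))
  rwa [weakLpNorm_comp_equiv s y (Fintype.equivFin J).symm,
    (Fintype.equivFin J).symm.sum_comp (fun j => ‖u (y j)‖ ^ s)] at h

/-- An absolutely `s`-summing operator maps families with small mixed `(s,q)`-norm to families
with small strong `ℓ^q` norm: this is Hölder's inequality with `1/q = 1/ρ + 1/s`. -/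
lemma sum_le_mul_mixedNorm {G : Type*} [NormedAddCommGroup G] [NormedSpace 𝕂 G] {s q C : ℝ}
    (hq : 0 < q) (hqs : q ≤ s) (hC : 0 ≤ C) {u : F →L[𝕂] G}
    (hu : ∀ (k : ℕ) (y : Fin k → F),
      (∑ j : Fin k, ‖u (y j)‖ ^ s) ^ (1 / s) ≤ C * weakLpNorm 𝕂 s y) (z : J → F) :
    (∑ j, ‖u (z j)‖ ^ q) ^ (1 / q) ≤ C * mixedNorm 𝕂 s q z := by
  unfold mixedNorm
  rw [← smul_eq_mul, ← Real.sInf_smul_of_nonneg hC]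
  refine le_csInf (Set.Nonempty.smul_set ⟨_, fun _ => 1, z, by simp, rfl⟩) ?_
  rintro _ ⟨_, ⟨τ, y, hz, rfl⟩, rfl⟩
  have hs : 0 < s := hq.trans_le hqs
  have hy := AbsolutelySummingOp.sum_le hu y
  have hn : ∀ j, ‖u (z j)‖ = ‖τ j‖ * ‖u (y j)‖ := fun j => by
    rw [hz j, map_smul, norm_smul]
  simp only [hn, smul_eq_mul]
  split_ifs with hsq
  · subst hsq
    set T := ⨆ j, ‖τ j‖
    have hT0 : 0 ≤ T := Real.iSup_nonneg fun _ => norm_nonneg _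
    have hT : ∀ j, ‖τ j‖ ≤ T := fun j => le_ciSup (f := fun j => ‖τ j‖) (Set.finite_range _).bddAbove j
    calc (∑ j, (‖τ j‖ * ‖u (y j)‖) ^ s) ^ (1 / s)
        ≤ (∑ j, (T * ‖u (y j)‖) ^ s) ^ (1 / s) := by
          gcongr with j
          exact hT j
      _ = T * (∑ j, ‖u (y j)‖ ^ s) ^ (1 / s) := by
          simp_rw [Real.mul_rpow hT0 (norm_nonneg _), ← Finset.mul_sum]
          rw [Real.mul_rpow (by positivity) (by positivity), ← Real.rpow_mul hT0,
            mul_one_div_cancel hs.ne', Real.rpow_one]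
      _ ≤ T * (C * weakLpNorm 𝕂 s y) := by gcongr
      _ = _ := by ring
  · have hlt : q < s := lt_of_le_of_ne hqs (Ne.symm hsq)
    have hρ : 0 < 1 / q - 1 / s := sub_pos.2 (one_div_lt_one_div_of_lt hq hlt)
    set t := 1 / q - 1 / s with ht
    have hH : Real.HolderTriple t⁻¹ s q := ⟨by rw [inv_inv, ht]; simp, by positivity, hs⟩
    have h := Real.Lr_rpow_le_Lp_mul_Lq_of_nonneg Finset.univ hH
      (f := fun j => ‖τ j‖) (g := fun j => ‖u (y j)‖) (by simp) (by simp)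
    calc (∑ j, (‖τ j‖ * ‖u (y j)‖) ^ q) ^ (1 / q)
        ≤ ((∑ j, ‖τ j‖ ^ t⁻¹) ^ (q / t⁻¹) * (∑ j, ‖u (y j)‖ ^ s) ^ (q / s)) ^ (1 / q) := by
          gcongr
      _ = (∑ j, ‖τ j‖ ^ t⁻¹) ^ t * (∑ j, ‖u (y j)‖ ^ s) ^ (1 / s) := by
          rw [Real.mul_rpow (by positivity) (by positivity), ← Real.rpow_mul (by positivity),
            ← Real.rpow_mul (by positivity)]
          congr 2 <;> field_simp
      _ ≤ (∑ j, ‖τ j‖ ^ t⁻¹) ^ t * (C * weakLpNorm 𝕂 s y) := by gcongr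
      _ = _ := by ring

end Mixed

/-! ### A supporting functional from concave maximization -/

section Support

variable {J : Type*} [Fintype J]

/-- First-order optimality for the concave function `a ↦ ∑ (a j + ε) ^ r` on a compact convex
set of nonnegative vectors: a maximizer `b` yields a supporting functional with weights
`(b j + ε) ^ (r - 1)`. -/
lemma exists_support {K : Set (J → ℝ)} (hK : IsCompact K) (hconv : Convex ℝ K)
    (hne : K.Nonempty) (hpos : ∀ a ∈ K, ∀ j, 0 ≤ a j) {r ε : ℝ} (hr : 0 < r) (hε : 0 < ε) :
    ∃ b ∈ K, ∀ a ∈ K,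
      ∑ j, (a j + ε) * (b j + ε) ^ (r - 1) ≤ ∑ j, (b j + ε) ^ r := by
  have hcont : ContinuousOn (fun a : J → ℝ => ∑ j, (a j + ε) ^ r) K := by
    refine Continuous.continuousOn (continuous_finsetSum _ fun j _ => ?_)
    exact ((continuous_apply j).add continuous_const).rpow_const fun _ => Or.inr hr.le
  obtain ⟨b, hb, hmax⟩ := hK.exists_isMaxOn hne hcont
  refine ⟨b, hb, fun a ha => ?_⟩
  have hbj : ∀ j, 0 < b j + ε := fun j => add_pos_of_nonneg_of_pos (hpos b hb j) hε
  have hd : HasFDerivAt (fun a : J → ℝ => ∑ j, (a j + ε) ^ r)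
      (∑ j, (r * (b j + ε) ^ (r - 1)) • ContinuousLinearMap.proj (R := ℝ) (φ := fun _ : J => ℝ) j)
      b := by
    refine HasFDerivAt.fun_sum fun j _ => ?_
    exact ((hasFDerivAt_apply j b).add_const ε).rpow_const (Or.inl (hbj j).ne')
  have h := hmax.localize.hasFDerivWithinAt_nonpos hd.hasFDerivWithinAt
    (y := a - b) (sub_mem_posTangentConeAt_of_segment_subset (hconv.segment_subset hb ha))
  simp only [sum_apply, smul_apply,
    ContinuousLinearMap.proj_apply, Pi.sub_apply, smul_eq_mul] at h
  have h2 : r * ∑ j, ((a j + ε) * (b j + ε) ^ (r - 1) - (b j + ε) ^ r) ≤ 0 := by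
    rw [Finset.mul_sum]
    refine le_of_eq_of_le (Finset.sum_congr rfl fun j _ => ?_) h
    have : (b j + ε) ^ r = (b j + ε) ^ (r - 1) * (b j + ε) := by
      rw [Real.rpow_sub_one (hbj j).ne', div_mul_cancel₀ _ (hbj j).ne']
    rw [this]
    ring
  rw [Finset.sum_sub_distrib] at h2
  nlinarith [nonpos_of_mul_nonpos_right h2 hr]

end Support

/-! ### Maurey's estimate of the mixed norm -/

section Domination

variable {𝕂 : Type*} [RCLike 𝕂] {F : Type*} [NormedAddCommGroup F] [NormedSpace 𝕂 F]
  {J : Type*} [Fintype J]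

/-- The vectors `(|φ (z j)| ^ s)_j` for `φ` in the dual unit ball. Points of the convex hull of
this set are the vectors `(∫ |φ (z j)| ^ s dμ(φ))_j` with `μ` a finitely supported probability
measure on the dual ball. -/
def weakPowers (𝕂 : Type*) [RCLike 𝕂] {F : Type*} [NormedAddCommGroup F] [NormedSpace 𝕂 F]
    {J : Type*} (s : ℝ) (z : J → F) : Set (J → ℝ) :=
  {a | ∃ φ : F →L[𝕂] 𝕂, ‖φ‖ ≤ 1 ∧ a = fun j => ‖φ (z j)‖ ^ s}

/-- A supporting functional as produced by `exists_support` (with `c j = b j + ε` and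
`r = q / s`) gives a good factorization `z j = τ j • y j`, namely the one with
`τ j = c j ^ ((1 - q / s) / s)`: then `∑ |τ j| ^ ρ = M` and `‖y‖_{w,s} ≤ M ^ (1 / s)`. -/
lemma mixedNorm_le_of_support {s q : ℝ} (hq : 0 < q) (hqs : q ≤ s) (z : J → F)
    {c : J → ℝ} (hc : ∀ j, 0 < c j) {M : ℝ} (hM : M = ∑ j, c j ^ (q / s))
    (h : ∀ φ : F →L[𝕂] 𝕂, ‖φ‖ ≤ 1 → ∑ j, ‖φ (z j)‖ ^ s * c j ^ (q / s - 1) ≤ M) :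
    mixedNorm 𝕂 s q z ≤ M ^ (1 / q) := by
  have hs : 0 < s := hq.trans_le hqs
  have hM0 : 0 ≤ M := by
    rw [hM]
    exact Finset.sum_nonneg fun j _ => Real.rpow_nonneg (hc j).le _
  set e : ℝ := (1 - q / s) / s with he
  have hτpos : ∀ j, 0 < c j ^ e := fun j => Real.rpow_pos_of_pos (hc j) _
  set τ : J → 𝕂 := fun j => ((c j ^ e : ℝ) : 𝕂) with hτ
  have hτ0 : ∀ j, τ j ≠ 0 := fun j => by
    simp only [hτ]
    exact_mod_cast (hτpos j).ne'
  have hτn : ∀ j, ‖τ j‖ = c j ^ e := fun j => by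
    simp only [hτ]
    rw [RCLike.norm_ofReal, abs_of_pos (hτpos j)]
  set y : J → F := fun j => (τ j)⁻¹ • z j with hy
  have hzy : ∀ j, z j = τ j • y j := fun j => by
    simp only [hy]
    rw [smul_inv_smul₀ (hτ0 j)]
  have hw : weakLpNorm 𝕂 s y ≤ M ^ (1 / s) := by
    refine weakLpNorm_le y hs fun φ hφ => le_of_eq_of_le ?_ (h φ hφ)
    refine Finset.sum_congr rfl fun j _ => ?_
    simp only [hy]
    rw [map_smul, norm_smul, norm_inv, hτn, Real.mul_rpow (by have := hτpos j; positivity)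
      (norm_nonneg _), mul_comm, ← Real.rpow_neg (hc j).le, ← Real.rpow_mul (hc j).le]
    congr 2
    rw [he]
    field_simp
    ring
  refine (mixedNorm_le_of_factor s q z τ y hzy).trans ?_
  split_ifs with hsq
  · subst hsq
    have h1 : (⨆ j, ‖τ j‖) ≤ 1 := by
      refine Real.iSup_le (fun j => ?_) zero_le_one
      rw [hτn, he, div_self hs.ne']
      simp
    calc _ ≤ 1 * M ^ (1 / s) := by
          gcongr
          exact weakLpNorm_nonneg _ _
      _ = _ := one_mul _
  · have hlt : q < s := lt_of_le_of_ne hqs (Ne.symm hsq)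
    have hρ : 0 < 1 / q - 1 / s := sub_pos.2 (one_div_lt_one_div_of_lt hq hlt)
    have hsum : ∑ j, ‖τ j‖ ^ (1 / q - 1 / s)⁻¹ = M := by
      rw [hM]
      refine Finset.sum_congr rfl fun j _ => ?_
      rw [hτn, ← Real.rpow_mul (hc j).le]
      congr 1
      have : s - q ≠ 0 := sub_ne_zero.2 hsq
      rw [he]
      field_simp
    rw [hsum]
    calc _ ≤ M ^ (1 / q - 1 / s) * M ^ (1 / s) := by gcongr
      _ = M ^ (1 / q) := by
          rw [← Real.rpow_add_of_nonneg hM0 hρ.le (by positivity), sub_add_cancel]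

/-- Maurey's estimate of the mixed norm: it suffices to bound
`∑ j, (∫ |φ (z j)| ^ s dμ) ^ (q / s)` over finitely supported probability measures `μ` on the
dual ball. -/
lemma mixedNorm_le_of_convexHull {s q K : ℝ} (hq : 0 < q) (hqs : q ≤ s) (z : J → F)
    (h : ∀ a ∈ convexHull ℝ (weakPowers 𝕂 s z), ∑ j, a j ^ (q / s) ≤ K) :
    mixedNorm 𝕂 s q z ≤ K ^ (1 / q) := by
  have hs : 0 < s := hq.trans_le hqs
  have hr : 0 < q / s := div_pos hq hs
  have hr1 : q / s ≤ 1 := (div_le_one hs).2 hqs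
  set S := weakPowers 𝕂 s z with hS
  have hSbd : S ⊆ Set.Icc 0 (fun j => ‖z j‖ ^ s) := by
    rintro _ ⟨φ, hφ, rfl⟩
    refine ⟨fun j => by simp only [Pi.zero_apply]; positivity, fun j => ?_⟩
    have : ‖φ (z j)‖ ≤ ‖z j‖ := (φ.le_opNorm _).trans (mul_le_of_le_one_left (norm_nonneg _) hφ)
    dsimp only
    gcongr
  have hHbd : closure (convexHull ℝ S) ⊆ Set.Icc 0 (fun j => ‖z j‖ ^ s) :=
    closure_minimal (convexHull_min hSbd (convex_Icc _ _)) isClosed_Icc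
  have hHc : IsCompact (closure (convexHull ℝ S)) :=
    isCompact_Icc.of_isClosed_subset isClosed_closure hHbd
  have hne : (closure (convexHull ℝ S)).Nonempty :=
    ⟨_, subset_closure (subset_convexHull ℝ S ⟨0, by simp, rfl⟩)⟩
  have hHK : ∀ a ∈ closure (convexHull ℝ S), ∑ j, a j ^ (q / s) ≤ K := by
    have hcl : IsClosed {a : J → ℝ | ∑ j, a j ^ (q / s) ≤ K} := by
      refine isClosed_le (continuous_finsetSum _ fun j _ => ?_) continuous_const
      exact (continuous_apply j).rpow_const fun _ => Or.inr hr.le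
    exact fun a ha => closure_minimal (fun a ha => h a ha) hcl ha
  have key : ∀ ε : ℝ, 0 < ε → mixedNorm 𝕂 s q z ≤
      (K + ∑ _j : J, ε ^ (q / s)) ^ (1 / q) := by
    intro ε hε
    obtain ⟨b, hb, hsup⟩ := exists_support hHc (convex_convexHull ℝ S).closure hne
      (fun a ha j => (hHbd ha).1 j) hr hε
    have hb0 : ∀ j, 0 ≤ b j := fun j => (hHbd hb).1 j
    have hc : ∀ j, 0 < b j + ε := fun j => add_pos_of_nonneg_of_pos (hb0 j) hε
    refine (mixedNorm_le_of_support hq hqs z hc rfl fun φ hφ => ?_).trans ?_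
    · refine le_trans ?_ (hsup _ (subset_closure (subset_convexHull ℝ S ⟨φ, hφ, rfl⟩)))
      refine Finset.sum_le_sum fun j _ => ?_
      have := Real.rpow_nonneg (hc j).le (q / s - 1)
      gcongr
      linarith
    · have h0 : 0 ≤ ∑ j, (b j + ε) ^ (q / s) :=
        Finset.sum_nonneg fun j _ => Real.rpow_nonneg (hc j).le _
      refine Real.rpow_le_rpow h0 ?_ (by positivity)
      calc ∑ j, (b j + ε) ^ (q / s) ≤ ∑ j, (b j ^ (q / s) + ε ^ (q / s)) :=
            Finset.sum_le_sum fun j _ =>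
              Real.rpow_add_le_add_rpow (hb0 j) hε.le hr.le hr1
        _ ≤ K + ∑ _j : J, ε ^ (q / s) := by
            rw [Finset.sum_add_distrib]
            gcongr
            exact hHK b hb
  have hlim : Filter.Tendsto (fun ε : ℝ => (K + ∑ _j : J, ε ^ (q / s)) ^ (1 / q))
      (nhdsWithin 0 (Set.Ioi 0)) (nhds (K ^ (1 / q))) := by
    have hcont : Continuous fun ε : ℝ => (K + ∑ _j : J, ε ^ (q / s)) ^ (1 / q) := by
      refine Continuous.rpow_const (continuous_const.add (continuous_finsetSum _ fun j _ => ?_))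
        fun _ => Or.inr (by positivity)
      exact continuous_id.rpow_const fun _ => Or.inr hr.le
    have h1 := (hcont.tendsto 0).mono_left (nhdsWithin_le_nhds (s := Set.Ioi (0 : ℝ)))
    simpa [Real.zero_rpow hr.ne'] using h1
  exact ge_of_tendsto hlim (eventually_mem_nhdsWithin.mono fun ε hε => key ε hε)

end Domination

/-! ### Diagonal operators into `ℓ^s` -/

section Operator

variable {𝕂 : Type*} [RCLike 𝕂]

universe v w

/-- A Banach space whose underlying type is essentially `w`-small has an isometric copy in
`Type w`. -/
lemma exists_isometric_copy (X : Type v) [NormedAddCommGroup X] [NormedSpace 𝕂 X]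
    [CompleteSpace X] [Small.{w} X] :
    ∃ (G : Type w) (_ : NormedAddCommGroup G) (_ : NormedSpace 𝕂 G) (_ : CompleteSpace G),
      Nonempty (X ≃ₗᵢ[𝕂] G) := by
  let e : Shrink.{w} X ≃ₗ[𝕂] X := Shrink.linearEquiv 𝕂 X
  let i1 : NormedAddCommGroup (Shrink.{w} X) :=
    NormedAddCommGroup.induced (Shrink.{w} X) X e e.injective
  let i2 : NormedSpace 𝕂 (Shrink.{w} X) := NormedSpace.induced 𝕂 (Shrink.{w} X) X e
  let f : Shrink.{w} X ≃ₗᵢ[𝕂] X := ⟨e, fun _ => rfl⟩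
  have i3 : CompleteSpace (Shrink.{w} X) :=
    (completeSpace_congr (e := f.toIsometryEquiv.toEquiv) f.isometry.isUniformEmbedding).2 inferInstance
  exact ⟨Shrink.{w} X, i1, i2, i3, ⟨f.symm⟩⟩

/-- The diagonal operator `y ↦ (c i ^ (1/s) φ i y)_i` into `ℓ^s`. Elements of `ℓ^s(I, 𝕂)` form a
set of cardinality at most that of `I → ℝ × ℝ`, so the target may be taken in any universe. -/
lemma exists_diagonal_operator {F : Type*} [NormedAddCommGroup F] [NormedSpace 𝕂 F] {s : ℝ}
    (hs : 1 ≤ s) {I : Type} (c : I → ℝ) (hc : ∀ i, 0 ≤ c i) (hsum : Summable c)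
    (φ : I → F →L[𝕂] 𝕂) (hφ : ∀ i, ‖φ i‖ ≤ 1) :
    ∃ (G : Type w) (_ : NormedAddCommGroup G) (_ : NormedSpace 𝕂 G) (_ : CompleteSpace G)
      (u : F →L[𝕂] G), ∀ y, HasSum (fun i => c i * ‖φ i y‖ ^ s) (‖u y‖ ^ s) := by
  have hs0 : 0 < s := zero_lt_one.trans_le hs
  set P : ENNReal := ENNReal.ofReal s with hP
  have hPr : P.toReal = s := ENNReal.toReal_ofReal hs0.le
  have : Fact (1 ≤ P) := ⟨by rw [hP, ← ENNReal.ofReal_one]; exact ENNReal.ofReal_le_ofReal hs⟩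
  have : Small.{w} (lp (fun _ : I => 𝕂) P) := by
    refine small_of_injective (β := I → ℝ × ℝ)
      (f := fun x i => (RCLike.re (x i), RCLike.im (x i))) fun x y hxy => ?_
    refine lp.ext (funext fun i => ?_)
    have := congrFun hxy i
    simp only [Prod.mk.injEq] at this
    exact RCLike.ext this.1 this.2
  obtain ⟨G, i1, i2, i3, ⟨f⟩⟩ := exists_isometric_copy.{_, w, _} (𝕂 := 𝕂) (lp (fun _ : I => 𝕂) P)
  have hn : ∀ y i, ‖((c i ^ (1 / s) : ℝ) : 𝕂) * φ i y‖ ^ s = c i * ‖φ i y‖ ^ s := fun y i => by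
    rw [norm_mul, RCLike.norm_ofReal, abs_of_nonneg (Real.rpow_nonneg (hc i) _),
      Real.mul_rpow (Real.rpow_nonneg (hc i) _) (norm_nonneg _), ← Real.rpow_mul (hc i),
      one_div_mul_cancel hs0.ne', Real.rpow_one]
  have hle : ∀ y i, c i * ‖φ i y‖ ^ s ≤ c i * ‖y‖ ^ s := fun y i => by
    have h1 : ‖φ i y‖ ≤ ‖y‖ :=
      ((φ i).le_opNorm y).trans (mul_le_of_le_one_left (norm_nonneg _) (hφ i))
    have := hc i
    gcongr
  have hsm : ∀ y, Summable fun i => c i * ‖φ i y‖ ^ s := fun y =>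
    Summable.of_nonneg_of_le (fun i => mul_nonneg (hc i) (by positivity)) (hle y)
      (hsum.mul_right _)
  have hmem : ∀ y, Memℓp (fun i => ((c i ^ (1 / s) : ℝ) : 𝕂) * φ i y) P := fun y => by
    refine memℓp_gen ?_
    simp only [hPr, hn]
    exact hsm y
  let L : F →ₗ[𝕂] lp (fun _ : I => 𝕂) P :=
    { toFun := fun y => ⟨fun i => ((c i ^ (1 / s) : ℝ) : 𝕂) * φ i y, hmem y⟩
      map_add' := fun x y => lp.ext (funext fun i => by
        change _ = (_ : 𝕂) + _
        simp [mul_add])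
      map_smul' := fun a y => lp.ext (funext fun i => by
        change _ = a • (_ : 𝕂)
        simp [mul_left_comm]) }
  have hL : ∀ y, HasSum (fun i => c i * ‖φ i y‖ ^ s) (‖L y‖ ^ s) := fun y => by
    have h := lp.hasSum_norm (p := P) (by rw [hPr]; exact hs0) (L y)
    rw [hPr] at h
    convert h using 1
    funext i
    exact (hn y i).symm
  have hbound : ∀ y, ‖L y‖ ≤ (∑' i, c i) ^ (1 / s) * ‖y‖ := fun y => by
    have h0 : 0 ≤ ∑' i, c i := tsum_nonneg hc
    rw [← Real.rpow_le_rpow_iff (norm_nonneg _) (by positivity) hs0,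
      Real.mul_rpow (by positivity) (norm_nonneg _), ← Real.rpow_mul h0,
      one_div_mul_cancel hs0.ne', Real.rpow_one, ← tsum_mul_right]
    exact hasSum_le (hle y) (hL y) (hsum.mul_right _).hasSum
  refine ⟨G, i1, i2, i3,
    (f.toLinearIsometry.toContinuousLinearMap).comp (L.mkContinuous _ hbound), fun y => ?_⟩
  have : ‖((f.toLinearIsometry.toContinuousLinearMap).comp (L.mkContinuous _ hbound)) y‖ = ‖L y‖ :=
    f.norm_map (L y)
  rw [this]
  exact hL y

/-- An operator dominated by a finite discrete measure on the dual ball is absolutely summing. -/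
lemma absolutelySummingOp_of_hasSum {F : Type*} [NormedAddCommGroup F] [NormedSpace 𝕂 F] {s : ℝ}
    (hs : 0 < s) {I : Type} (c : I → ℝ) (hc : ∀ i, 0 ≤ c i) (hsum : Summable c)
    (φ : I → F →L[𝕂] 𝕂) (hφ : ∀ i, ‖φ i‖ ≤ 1) {G : Type*} [NormedAddCommGroup G]
    [NormedSpace 𝕂 G] (u : F →L[𝕂] G)
    (hu : ∀ y, HasSum (fun i => c i * ‖φ i y‖ ^ s) (‖u y‖ ^ s)) :
    AbsolutelySummingOp 𝕂 s u := by
  have h0 : 0 ≤ ∑' i, c i := tsum_nonneg hc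
  refine ⟨(∑' i, c i) ^ (1 / s), by positivity, fun k y => ?_⟩
  have hw := weakLpNorm_nonneg (𝕂 := 𝕂) s y
  have h1 : ∑ j, ‖u (y j)‖ ^ s ≤ (∑' i, c i) * weakLpNorm 𝕂 s y ^ s := by
    have h2 : HasSum (fun i => ∑ j, c i * ‖φ i (y j)‖ ^ s) (∑ j, ‖u (y j)‖ ^ s) :=
      hasSum_sum fun j _ => hu (y j)
    rw [← tsum_mul_right]
    refine hasSum_le (fun i => ?_) h2 (hsum.mul_right _).hasSum
    rw [← Finset.mul_sum]
    exact mul_le_mul_of_nonneg_left (sum_rpow_le_weakLpNorm_rpow hs y (hφ i)) (hc i)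
  calc (∑ j, ‖u (y j)‖ ^ s) ^ (1 / s) ≤ ((∑' i, c i) * weakLpNorm 𝕂 s y ^ s) ^ (1 / s) := by
        gcongr
    _ = _ := by
        rw [Real.mul_rpow h0 (by positivity), ← Real.rpow_mul hw, mul_one_div_cancel hs.ne',
          Real.rpow_one]

end Operator

/-! ### Gliding hump and the equivalence -/

section Violation

/-- If `A` is not mixing summing, every constant `σ` is violated by some discrete probability
measure `(w, φ)` on the dual ball together with some grid of values of `A`. -/
lemma exists_violation {𝕂 : Type*} [RCLike 𝕂] {n : ℕ} {s q : ℝ} {p : Fin n → ℝ}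
    (hq : 0 < q) (hqs : q ≤ s)
    {E : Fin n → Type*} [∀ i, NormedAddCommGroup (E i)] [∀ i, NormedSpace 𝕂 (E i)]
    {F : Type*} [NormedAddCommGroup F] [NormedSpace 𝕂 F]
    {A : ((i : Fin n) → E i) → F} (hA : ¬ MultipleMixingSumming 𝕂 s q p A)
    {σ : ℝ} (hσ : 0 ≤ σ) :
    ∃ (m : ℕ) (x : (i : Fin n) → Fin m → E i) (ι : Type) (_ : Fintype ι) (w : ι → ℝ)
      (φ : ι → F →L[𝕂] 𝕂), (∀ i, 0 ≤ w i) ∧ ∑ i, w i = 1 ∧ (∀ i, ‖φ i‖ ≤ 1) ∧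
      (σ * ∏ i, weakLpNorm 𝕂 (p i) (x i)) ^ q <
        ∑ j : Fin n → Fin m, (∑ i, w i * ‖φ i (A (fun k => x k (j k)))‖ ^ s) ^ (q / s) := by
  by_contra! hcon
  refine hA ⟨σ, hσ, fun m x => ?_⟩
  have hP : 0 ≤ σ * ∏ i, weakLpNorm 𝕂 (p i) (x i) :=
    mul_nonneg hσ (Finset.prod_nonneg fun i _ => weakLpNorm_nonneg _ _)
  have h := mixedNorm_le_of_convexHull (𝕂 := 𝕂) hq hqs
    (fun j : Fin n → Fin m => A (fun i => x i (j i)))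
    (K := (σ * ∏ i, weakLpNorm 𝕂 (p i) (x i)) ^ q) fun a ha => ?_
  · rwa [← Real.rpow_mul hP, mul_one_div_cancel hq.ne', Real.rpow_one] at h
  obtain ⟨ι, hι, w, b, hw0, hw1, hb, rfl⟩ := mem_convexHull_iff_exists_fintype.1 ha
  choose φ hφ hbφ using hb
  have h := hcon m x ι hι w φ hw0 hw1 hφ
  simpa [hbφ] using h

end Violation

/-- quotient theorem: `A` is multiple `(s,q;p₁,…,pₙ)`-mixing summing iff
`u ∘ A` is multiple `(q;p₁,…,pₙ)`-summing for every absolutely `s`-summing operator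
`u : F → G` into any Banach space `G`. -/
theorem multipleMixingSumming_iff_comp
    {𝕂 : Type*} [RCLike 𝕂] {n : ℕ} (hn : 1 ≤ n)
    (s q : ℝ) (p : Fin n → ℝ) (hp : ∀ k, 1 ≤ p k) (hpq : ∀ k, p k ≤ q) (hqs : q ≤ s)
    (E : Fin n → Type*) [∀ i, NormedAddCommGroup (E i)] [∀ i, NormedSpace 𝕂 (E i)]
    [∀ i, CompleteSpace (E i)]
    (F : Type*) [NormedAddCommGroup F] [NormedSpace 𝕂 F] [CompleteSpace F]
    (A : ContinuousMultilinearMap 𝕂 E F) :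
    MultipleMixingSumming 𝕂 s q p (⇑A) ↔
      ∀ (G : Type uG) [NormedAddCommGroup G] [NormedSpace 𝕂 G] [CompleteSpace G]
        (u : F →L[𝕂] G), AbsolutelySummingOp 𝕂 s u →
          MultipleSumming 𝕂 q p (fun x => u (A x)) := by
  have hq1 : 1 ≤ q := (hp ⟨0, hn⟩).trans (hpq ⟨0, hn⟩)
  have hq : 0 < q := zero_lt_one.trans_le hq1
  have hs1 : 1 ≤ s := hq1.trans hqs
  have hs : 0 < s := zero_lt_one.trans_le hs1
  constructor
  · rintro ⟨σ, hσ, hA⟩ G _ _ _ u ⟨C, hC, hu⟩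
    refine ⟨C * σ, mul_nonneg hC hσ, fun m x => ?_⟩
    calc _ ≤ C * mixedNorm 𝕂 s q (fun j : Fin n → Fin m => A (fun i => x i (j i))) :=
          sum_le_mul_mixedNorm hq hqs hC hu _
      _ ≤ C * (σ * ∏ i, weakLpNorm 𝕂 (p i) (x i)) := by
          gcongr
          exact hA m x
      _ = _ := by ring
  · intro H
    by_contra hA
    -- Gliding hump: the `N`-th violation is for the constant `4 ^ N`, and its measure gets
    -- weight `2⁻ᴺ` in the combined measure, which leaves room for a factor `2 ^ N`.
    choose m x ι hι w φ hw0 hw1 hφ hlt using fun N : ℕ =>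
      exists_violation hq hqs hA (σ := (4 : ℝ) ^ N) (by positivity)
    let c : (Σ N, ι N) → ℝ := fun i => (1 / 2 : ℝ) ^ i.1 * w i.1 i.2
    have hc : ∀ i, 0 ≤ c i := fun i => mul_nonneg (by positivity) (hw0 _ _)
    have hsum : Summable c := by
      rw [summable_sigma_of_nonneg hc]
      refine ⟨fun N => Summable.of_finite, ?_⟩
      have : ∀ N, ∑' i : ι N, c ⟨N, i⟩ = (1 / 2 : ℝ) ^ N := fun N => by
        rw [tsum_fintype]
        simp only [c]
        rw [← Finset.mul_sum, hw1, mul_one]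
      simp only [this]
      exact summable_geometric_two
    let ψ : (Σ N, ι N) → F →L[𝕂] 𝕂 := fun i => φ i.1 i.2
    have hψ : ∀ i, ‖ψ i‖ ≤ 1 := fun i => hφ _ _
    obtain ⟨G, _, _, _, u, hu⟩ := exists_diagonal_operator hs1 c hc hsum ψ hψ
    obtain ⟨C, hC, hT⟩ := H G u (absolutelySummingOp_of_hasSum hs c hc hsum ψ hψ u hu)
    obtain ⟨N, hN⟩ := pow_unbounded_of_one_lt C (one_lt_two : (1 : ℝ) < 2)
    have hP : 0 ≤ ∏ i, weakLpNorm 𝕂 (p i) (x N i) :=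
      Finset.prod_nonneg fun i _ => weakLpNorm_nonneg _ _
    set P := ∏ i, weakLpNorm 𝕂 (p i) (x N i) with hPdef
    -- Only the `N`-th block of `u` is needed for the lower bound.
    have hblock : ∀ y, (1 / 2 : ℝ) ^ N * ∑ i, w N i * ‖φ N i y‖ ^ s ≤ ‖u y‖ ^ s := fun y => by
      have h := sum_le_hasSum (Finset.univ.map (Function.Embedding.sigmaMk (β := ι) N))
        (fun i _ => mul_nonneg (hc i) (by positivity)) (hu y)
      rw [Finset.sum_map] at h
      refine le_of_eq_of_le ?_ h
      rw [Finset.mul_sum]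
      exact Finset.sum_congr rfl fun i _ => (mul_assoc _ _ _).symm
    have hlow : ∀ y, ((1 / 2 : ℝ) ^ N) ^ q * (∑ i, w N i * ‖φ N i y‖ ^ s) ^ (q / s) ≤
        ‖u y‖ ^ q := fun y => by
      have h0 : 0 ≤ ∑ i, w N i * ‖φ N i y‖ ^ s :=
        Finset.sum_nonneg fun i _ => mul_nonneg (hw0 _ _) (by positivity)
      have hr : 0 ≤ q / s := by positivity
      calc ((1 / 2 : ℝ) ^ N) ^ q * (∑ i, w N i * ‖φ N i y‖ ^ s) ^ (q / s)
          ≤ ((1 / 2 : ℝ) ^ N) ^ (q / s) * (∑ i, w N i * ‖φ N i y‖ ^ s) ^ (q / s) := by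
            refine mul_le_mul_of_nonneg_right ?_ (Real.rpow_nonneg h0 _)
            exact Real.rpow_le_rpow_of_exponent_ge (by positivity)
              (pow_le_one₀ (by norm_num) (by norm_num)) (div_le_self hq.le hs1)
        _ = ((1 / 2 : ℝ) ^ N * ∑ i, w N i * ‖φ N i y‖ ^ s) ^ (q / s) :=
            (Real.mul_rpow (by positivity) h0).symm
        _ ≤ (‖u y‖ ^ s) ^ (q / s) := Real.rpow_le_rpow (by positivity) (hblock y) hr
        _ = ‖u y‖ ^ q := by
            rw [← Real.rpow_mul (norm_nonneg _), mul_div_cancel₀ _ hs.ne']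
    have h1 : ((1 / 2 : ℝ) ^ N * ((4 : ℝ) ^ N * P)) ^ q < (C * P) ^ q := by
      calc ((1 / 2 : ℝ) ^ N * ((4 : ℝ) ^ N * P)) ^ q
          = ((1 / 2 : ℝ) ^ N) ^ q * ((4 : ℝ) ^ N * P) ^ q :=
            Real.mul_rpow (by positivity) (by positivity)
        _ < ((1 / 2 : ℝ) ^ N) ^ q * _ := mul_lt_mul_of_pos_left (hlt N) (by positivity)
        _ ≤ ∑ j : Fin n → Fin (m N), ‖u (A (fun k => x N k (j k)))‖ ^ q := by
            rw [Finset.mul_sum]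
            exact Finset.sum_le_sum fun j _ => hlow _
        _ ≤ (C * P) ^ q := by
            have h := Real.rpow_le_rpow (by positivity) (hT (m N) (x N)) hq.le
            rwa [← Real.rpow_mul (by positivity), one_div_mul_cancel hq.ne', Real.rpow_one] at h
    have h2 := (Real.rpow_lt_rpow_iff (by positivity) (by positivity) hq).1 h1
    rw [← mul_assoc, ← mul_pow] at h2
    norm_num at h2
    exact absurd h2 (not_lt.2 (mul_le_mul_of_nonneg_right hN.le hP))
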